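/- Let Y = L* + S* where L* ∈ ℝ^{n₁×n₂} has rank r and is μ-incoherent, and S* ∈ S_{γ*}. Let a ≤ 1/2, γ > 2γ*, and C₁ = √(4(γ+2γ*)μr + 4γ*/(γ−γ*) + a²) < 1/2. If the initialization satisfies ‖L⁽⁰⁾ − L*‖_F ≤ a σ_r(L*), then there exists η₀ > 0 such that for all step sizes η < η₀, the iterates L⁽ᵏ⁾ of the manifold gradient descent L⁽ᵏ⁺¹⁾ = R_{L⁽ᵏ⁾}(−η P_{T_{L⁽ᵏ⁾}} F_γ(L⁽ᵏ⁾ − Y)) (with R either the projective or the orthographic retraction) satisfy ‖L⁽ᵏ⁾ − L*‖_F ≤ (1 − (1−2C₁)η/8)ᵏ ‖L⁽⁰⁾ − L*‖_F for all k. -/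

import Mathlib

open Matrix MeasureTheory ProbabilityTheory Filter
open scoped BigOperators ENNReal NNReal

noncomputable section

namespace RPCA

variable {n₁ n₂ r : ℕ}

/-- Frobenius norm of a real matrix. -/
def frob (A : Matrix (Fin n₁) (Fin n₂) ℝ) : ℝ :=
  Real.sqrt (∑ i, ∑ j, (A i j) ^ 2)

/-- Frobenius inner product of two real matrices. -/
def finner (A B : Matrix (Fin n₁) (Fin n₂) ℝ) : ℝ :=
  ∑ i, ∑ j, A i j * B i j

/-- Spectral norm (operator norm) of a real matrix. -/
def spec (A : Matrix (Fin n₁) (Fin n₂) ℝ) : ℝ :=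
  sSup {c | ∃ v : Fin n₂ → ℝ, (∑ j, (v j) ^ 2) = 1 ∧
    c = Real.sqrt (∑ i, (∑ j, A i j * v j) ^ 2)}

/-- Smallest singular value of a square matrix. -/
def sigmaMin (A : Matrix (Fin r) (Fin r) ℝ) : ℝ :=
  sInf {c | ∃ v : Fin r → ℝ, (∑ k, (v k) ^ 2) = 1 ∧
    c = Real.sqrt (∑ i, (∑ k, A i k * v k) ^ 2)}

/-- The γ-th percentile (counting the fraction γ from the largest) of a multiset of reals. -/
def percentile (γ : ℝ) (s : Multiset ℝ) : ℝ :=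
  (s.sort (· ≤ ·)).getD (s.card - ⌈γ * s.card⌉₊) 0

/-- Absolute values of the entries of row `i`. -/
def rowAbs (A : Matrix (Fin n₁) (Fin n₂) ℝ) (i : Fin n₁) : Multiset ℝ :=
  (Finset.univ : Finset (Fin n₂)).val.map fun j => |A i j|

/-- Absolute values of the entries of column `j`. -/
def colAbs (A : Matrix (Fin n₁) (Fin n₂) ℝ) (j : Fin n₂) : Multiset ℝ :=
  (Finset.univ : Finset (Fin n₁)).val.map fun i => |A i j|

/-- The hard-thresholding operator `F_γ`: entries that are simultaneously above the γ-th
percentile of absolute values of their row and of their column are set to zero. -/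
def hardThresh (γ : ℝ) (A : Matrix (Fin n₁) (Fin n₂) ℝ) : Matrix (Fin n₁) (Fin n₂) ℝ :=
  Matrix.of fun i j =>
    if percentile γ (rowAbs A i) < |A i j| ∧ percentile γ (colAbs A j) < |A i j| then 0
    else A i j

/-- Absolute values of the observed entries of row `i`. -/
def rowAbsObs (Φ : Finset (Fin n₁ × Fin n₂)) (A : Matrix (Fin n₁) (Fin n₂) ℝ) (i : Fin n₁) :
    Multiset ℝ :=
  ((Φ.filter fun q => q.1 = i).val).map fun q => |A q.1 q.2|

/-- Absolute values of the observed entries of column `j`. -/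
def colAbsObs (Φ : Finset (Fin n₁ × Fin n₂)) (A : Matrix (Fin n₁) (Fin n₂) ℝ) (j : Fin n₂) :
    Multiset ℝ :=
  ((Φ.filter fun q => q.2 = j).val).map fun q => |A q.1 q.2|

/-- Partially observed thresholding operator `F̃_γ`: `F̃_ij A = A i j` if `|A i j|` exceeds the
γ-th percentile of absolute values of observed entries in both its row and its column,
and `0` otherwise. -/
def hardThreshObs (γ : ℝ) (Φ : Finset (Fin n₁ × Fin n₂)) (A : Matrix (Fin n₁) (Fin n₂) ℝ) :
    Matrix (Fin n₁) (Fin n₂) ℝ :=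
  Matrix.of fun i j =>
    if percentile γ (rowAbsObs Φ A i) < |A i j| ∧ percentile γ (colAbsObs Φ A j) < |A i j| then
      A i j
    else 0

/-- `P_Φ`: zero out the entries outside the observed set `Φ`. -/
def projObs (Φ : Finset (Fin n₁ × Fin n₂)) (A : Matrix (Fin n₁) (Fin n₂) ℝ) :
    Matrix (Fin n₁) (Fin n₂) ℝ :=
  Matrix.of fun i j => if (i, j) ∈ Φ then A i j else 0

/-- The sparsity class `S_{γ*}`: at most `γ* n₂` nonzero entries in each row and at most
`γ* n₁` nonzero entries in each column. -/
def SparseSet (γs : ℝ) (A : Matrix (Fin n₁) (Fin n₂) ℝ) : Prop :=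
  (∀ i, (((Finset.univ : Finset (Fin n₂)).filter fun j => A i j ≠ 0).card : ℝ) ≤ γs * n₂) ∧
  (∀ j, (((Finset.univ : Finset (Fin n₁)).filter fun i => A i j ≠ 0).card : ℝ) ≤ γs * n₁)

/-- Thin SVD `L = U (diagonal s) Vᵀ` with orthonormal `U, V` and positive decreasing
singular values `s`; this encodes that `L` has rank exactly `r`. -/
def IsThinSVD (L : Matrix (Fin n₁) (Fin n₂) ℝ) (U : Matrix (Fin n₁) (Fin r) ℝ)
    (s : Fin r → ℝ) (V : Matrix (Fin n₂) (Fin r) ℝ) : Prop :=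
  Uᵀ * U = 1 ∧ Vᵀ * V = 1 ∧ Antitone s ∧ (∀ k, 0 < s k) ∧ L = U * Matrix.diagonal s * Vᵀ

/-- μ-incoherence of the orthonormal SVD factors `U, V`: every row of `U` has Euclidean norm
at most `√(μ r / n₁)` and every row of `V` has Euclidean norm at most `√(μ r / n₂)`. -/
def Incoherent (μc : ℝ) (U : Matrix (Fin n₁) (Fin r) ℝ) (V : Matrix (Fin n₂) (Fin r) ℝ) :
    Prop :=
  (∀ i, Real.sqrt (∑ k, (U i k) ^ 2) ≤ Real.sqrt (μc * r / n₁)) ∧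
  (∀ j, Real.sqrt (∑ k, (V j k) ^ 2) ≤ Real.sqrt (μc * r / n₂))

/-- Tangent-space projection `P_{T_X} D = UUᵀD + DVVᵀ − UUᵀDVVᵀ` at a rank-r point with
orthonormal factors `U, V`. -/
def tangentProj (U : Matrix (Fin n₁) (Fin r) ℝ) (V : Matrix (Fin n₂) (Fin r) ℝ)
    (D : Matrix (Fin n₁) (Fin n₂) ℝ) : Matrix (Fin n₁) (Fin n₂) ℝ :=
  U * Uᵀ * D + D * (V * Vᵀ) - U * Uᵀ * D * (V * Vᵀ)

/-- `Z` is a best rank-r approximation of `M` in Frobenius norm. -/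
def IsBestRankApprox (r : ℕ) (M Z : Matrix (Fin n₁) (Fin n₂) ℝ) : Prop :=
  Z.rank ≤ r ∧ ∀ W : Matrix (Fin n₁) (Fin n₂) ℝ, W.rank ≤ r → frob (M - Z) ≤ frob (M - W)

/-- Orthographic retraction formula `M V (Uᵀ M V)⁻¹ Uᵀ M` where `M = X + δ`. -/
def orthoRetract (U : Matrix (Fin n₁) (Fin r) ℝ) (V : Matrix (Fin n₂) (Fin r) ℝ)
    (M : Matrix (Fin n₁) (Fin n₂) ℝ) : Matrix (Fin n₁) (Fin n₂) ℝ :=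
  M * V * (Uᵀ * M * V)⁻¹ * (Uᵀ * M)

/-- `Lnext` is obtained from `Lk` by applying either the projective or the orthographic
retraction (for the rank-r manifold) to the tangent vector `δ` at `Lk`. -/
def IsRetractUpdate (r : ℕ) (Lk δ Lnext : Matrix (Fin n₁) (Fin n₂) ℝ) : Prop :=
  IsBestRankApprox r (Lk + δ) Lnext ∨
  ∃ (U : Matrix (Fin n₁) (Fin r) ℝ) (s : Fin r → ℝ) (V : Matrix (Fin n₂) (Fin r) ℝ),
    IsThinSVD Lk U s V ∧ Lnext = orthoRetract U V (Lk + δ)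

/-- One step of manifold gradient descent with the fully observed thresholded gradient:
`Lnext = R_{Lk}(−η P_{T_{Lk}} F_γ(Lk − Y))`. -/
def IsGradStep (γ η : ℝ) (r : ℕ) (Y Lk Lnext : Matrix (Fin n₁) (Fin n₂) ℝ) : Prop :=
  ∃ (U : Matrix (Fin n₁) (Fin r) ℝ) (s : Fin r → ℝ) (V : Matrix (Fin n₂) (Fin r) ℝ),
    IsThinSVD Lk U s V ∧
    IsRetractUpdate r Lk (-(η • tangentProj U V (hardThresh γ (Lk - Y)))) Lnext

/-- One step of manifold gradient descent with the partially observed thresholded gradient: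
`Lnext = R_{Lk}(−η P_{T_{Lk}} F̃_γ(Lk − Y))`. -/
def IsGradStepObs (γ η : ℝ) (r : ℕ) (Φ : Finset (Fin n₁ × Fin n₂))
    (Y Lk Lnext : Matrix (Fin n₁) (Fin n₂) ℝ) : Prop :=
  ∃ (U : Matrix (Fin n₁) (Fin r) ℝ) (s : Fin r → ℝ) (V : Matrix (Fin n₂) (Fin r) ℝ),
    IsThinSVD Lk U s V ∧
    IsRetractUpdate r Lk (-(η • tangentProj U V (hardThreshObs γ Φ (Lk - Y)))) Lnext

end RPCA

namespace RPCA
section helpers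

variable {n m k r : ℕ}

attribute [local instance] Matrix.frobeniusNormedAddCommGroup

lemma frob_eq_norm (A : Matrix (Fin n) (Fin m) ℝ) : frob A = ‖A‖ := by
  rw [Matrix.frobenius_norm_def, frob, Real.sqrt_eq_rpow]
  simp

lemma frob_nonneg (A : Matrix (Fin n) (Fin m) ℝ) : 0 ≤ frob A := Real.sqrt_nonneg _

lemma frob_sq (A : Matrix (Fin n) (Fin m) ℝ) : frob A ^ 2 = ∑ i, ∑ j, (A i j) ^ 2 := by
  rw [frob, Real.sq_sqrt]
  positivity

lemma frob_sq' (A : Matrix (Fin n) (Fin m) ℝ) : frob A ^ 2 = finner A A := by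
  rw [frob_sq, finner]
  simp [pow_two]

lemma frob_add_le (A B : Matrix (Fin n) (Fin m) ℝ) : frob (A + B) ≤ frob A + frob B := by
  simp only [frob_eq_norm]; exact norm_add_le _ _

lemma frob_sub_le (A B : Matrix (Fin n) (Fin m) ℝ) : frob (A - B) ≤ frob A + frob B := by
  simp only [frob_eq_norm]; exact norm_sub_le _ _

lemma frob_neg (A : Matrix (Fin n) (Fin m) ℝ) : frob (-A) = frob A := by
  simp only [frob_eq_norm]; exact norm_neg _

lemma frob_eq_zero {A : Matrix (Fin n) (Fin m) ℝ} (h : frob A = 0) : A = 0 := by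
  rw [frob_eq_norm] at h; exact norm_eq_zero.mp h

lemma frob_mul_le (A : Matrix (Fin n) (Fin m) ℝ) (B : Matrix (Fin m) (Fin k) ℝ) :
    frob (A * B) ≤ frob A * frob B := by
  simp only [frob_eq_norm]; exact Matrix.frobenius_norm_mul A B

lemma frob_transpose (A : Matrix (Fin n) (Fin m) ℝ) : frob Aᵀ = frob A := by
  rw [frob, frob, Finset.sum_comm]; rfl

lemma frob_smul (c : ℝ) (A : Matrix (Fin n) (Fin m) ℝ) : frob (c • A) = |c| * frob A := by
  rw [← abs_of_nonneg (frob_nonneg (c • A)), ← abs_of_nonneg (frob_nonneg A), ← abs_mul,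
    ← sq_eq_sq_iff_abs_eq_abs, mul_pow, frob_sq, frob_sq]
  simp [mul_pow, Finset.mul_sum]

lemma finner_eq_trace (A B : Matrix (Fin n) (Fin m) ℝ) : finner A B = (Aᵀ * B).trace := by
  rw [finner, Finset.sum_comm]
  simp [Matrix.trace, Matrix.mul_apply]

lemma finner_comm (A B : Matrix (Fin n) (Fin m) ℝ) : finner A B = finner B A := by
  simp [finner, mul_comm]

lemma finner_add_right (A B C : Matrix (Fin n) (Fin m) ℝ) :
    finner A (B + C) = finner A B + finner A C := by
  simp [finner, mul_add, Finset.sum_add_distrib]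

lemma finner_sub_right (A B C : Matrix (Fin n) (Fin m) ℝ) :
    finner A (B - C) = finner A B - finner A C := by
  simp [finner, mul_sub, Finset.sum_sub_distrib]

lemma finner_sub_left (A B C : Matrix (Fin n) (Fin m) ℝ) :
    finner (A - B) C = finner A C - finner B C := by
  simp [finner, sub_mul, Finset.sum_sub_distrib]

lemma finner_smul_right (c : ℝ) (A B : Matrix (Fin n) (Fin m) ℝ) :
    finner A (c • B) = c * finner A B := by
  simp only [finner, Finset.mul_sum, Matrix.smul_apply, smul_eq_mul]
  refine Finset.sum_congr rfl fun i _ => Finset.sum_congr rfl fun j _ => by ring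

lemma finner_mul_left (R : Matrix (Fin k) (Fin n) ℝ) (A : Matrix (Fin n) (Fin m) ℝ)
    (B : Matrix (Fin k) (Fin m) ℝ) : finner (R * A) B = finner A (Rᵀ * B) := by
  simp [finner_eq_trace, Matrix.mul_assoc]

lemma finner_mul_right (R : Matrix (Fin m) (Fin k) ℝ) (A : Matrix (Fin n) (Fin m) ℝ)
    (B : Matrix (Fin n) (Fin k) ℝ) : finner (A * R) B = finner A (B * Rᵀ) := by
  simp only [finner_eq_trace, Matrix.transpose_mul, Matrix.mul_assoc]
  rw [Matrix.trace_mul_comm, Matrix.mul_assoc]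

lemma abs_finner_le (A B : Matrix (Fin n) (Fin m) ℝ) : |finner A B| ≤ frob A * frob B := by
  have h : finner A B ^ 2 ≤ (frob A * frob B) ^ 2 := by
    rw [mul_pow, frob_sq, frob_sq, finner]
    simp only [← Finset.univ_product_univ, ← Fintype.sum_prod_type']
    exact Finset.sum_mul_sq_le_sq_mul_sq _ _ _
  exact abs_le_of_sq_le_sq h (mul_nonneg (frob_nonneg _) (frob_nonneg _))

lemma frob_sub_sq (A B : Matrix (Fin n) (Fin m) ℝ) :
    frob (A - B) ^ 2 = frob A ^ 2 - 2 * finner A B + frob B ^ 2 := by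
  rw [frob_sq', frob_sq', frob_sq', finner_sub_right, finner_sub_left, finner_sub_left,
    finner_comm B A]
  ring

/-- Orthonormal columns: `U` preserves the Frobenius norm. -/
lemma frob_iso {U : Matrix (Fin n) (Fin r) ℝ} (hU : Uᵀ * U = 1) (A : Matrix (Fin r) (Fin m) ℝ) :
    frob (U * A) = frob A := by
  rw [← sq_eq_sq₀ (frob_nonneg _) (frob_nonneg _), frob_sq', frob_sq', finner_mul_left,
    ← Matrix.mul_assoc, hU, Matrix.one_mul]

lemma pyth {U : Matrix (Fin n) (Fin r) ℝ} (hU : Uᵀ * U = 1) (A : Matrix (Fin n) (Fin m) ℝ) :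
    frob (Uᵀ * A) ^ 2 + frob ((1 - U * Uᵀ) * A) ^ 2 = frob A ^ 2 := by
  have h : (1 - U * Uᵀ) * A = A - U * (Uᵀ * A) := by
    rw [Matrix.sub_mul, Matrix.one_mul, Matrix.mul_assoc]
  rw [h, frob_sub_sq, frob_iso hU, finner_comm, finner_mul_left, ← frob_sq']
  ring

lemma frob_Ut {U : Matrix (Fin n) (Fin r) ℝ} (hU : Uᵀ * U = 1) (A : Matrix (Fin n) (Fin m) ℝ) :
    frob (Uᵀ * A) ≤ frob A := by
  have := pyth hU A
  apply le_of_sq_le_sq _ (frob_nonneg _)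
  nlinarith [sq_nonneg (frob ((1 - U * Uᵀ) * A))]

lemma frob_perp {U : Matrix (Fin n) (Fin r) ℝ} (hU : Uᵀ * U = 1) (A : Matrix (Fin n) (Fin m) ℝ) :
    frob ((1 - U * Uᵀ) * A) ≤ frob A := by
  have := pyth hU A
  apply le_of_sq_le_sq _ (frob_nonneg _)
  nlinarith [sq_nonneg (frob (Uᵀ * A))]

lemma perp_transpose (U : Matrix (Fin n) (Fin r) ℝ) : (1 - U * Uᵀ)ᵀ = 1 - U * Uᵀ := by
  simp

lemma frob_mulV {V : Matrix (Fin n) (Fin r) ℝ} (hV : Vᵀ * V = 1) (A : Matrix (Fin m) (Fin n) ℝ) :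
    frob (A * V) ≤ frob A := by
  have := frob_Ut hV Aᵀ
  rwa [← Matrix.transpose_mul, frob_transpose, frob_transpose] at this

lemma frob_mulperp {V : Matrix (Fin n) (Fin r) ℝ} (hV : Vᵀ * V = 1)
    (A : Matrix (Fin m) (Fin n) ℝ) : frob (A * (1 - V * Vᵀ)) ≤ frob A := by
  have := frob_perp hV Aᵀ
  rwa [← perp_transpose, ← Matrix.transpose_mul, frob_transpose, frob_transpose] at this

lemma frob_mulVt {V : Matrix (Fin n) (Fin r) ℝ} (hV : Vᵀ * V = 1) (A : Matrix (Fin m) (Fin r) ℝ) :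
    frob (A * Vᵀ) = frob A := by
  have := frob_iso hV Aᵀ
  rw [← frob_transpose, Matrix.transpose_mul, Matrix.transpose_transpose, this, frob_transpose]

lemma perp_mul {U : Matrix (Fin n) (Fin r) ℝ} (hU : Uᵀ * U = 1) : (1 - U * Uᵀ) * U = 0 := by
  rw [Matrix.sub_mul, Matrix.mul_assoc, hU]; simp

lemma mul_perp {U : Matrix (Fin n) (Fin r) ℝ} (hU : Uᵀ * U = 1) : Uᵀ * (1 - U * Uᵀ) = 0 := by
  rw [Matrix.mul_sub, ← Matrix.mul_assoc, hU]; simp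

lemma perp_perp {U : Matrix (Fin n) (Fin r) ℝ} (hU : Uᵀ * U = 1) :
    (1 - U * Uᵀ) * (1 - U * Uᵀ) = 1 - U * Uᵀ := by
  rw [Matrix.mul_sub, Matrix.mul_one, ← Matrix.mul_assoc, perp_mul hU]; simp

/-- Lower bound on the smallest singular value. -/
def LB (B : Matrix (Fin r) (Fin r) ℝ) (β : ℝ) : Prop :=
  ∀ (m : ℕ) (Z : Matrix (Fin r) (Fin m) ℝ), β * frob Z ≤ frob (B * Z)

lemma isUnit_of_inj (B : Matrix (Fin r) (Fin r) ℝ)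
    (h : ∀ Z : Matrix (Fin r) (Fin 1) ℝ, B * Z = 0 → Z = 0) : IsUnit B.det := by
  rw [← Matrix.isUnit_iff_isUnit_det, ← Matrix.mulVec_injective_iff_isUnit]
  intro x y hxy
  have h2 := h (Matrix.of fun i _ => x i - y i) (by
    ext i j
    have := congrFun hxy i
    simp only [Matrix.mulVec, dotProduct] at this
    simp [Matrix.mul_apply, mul_sub, this])
  ext i
  have := congrFun (congrFun h2 i) 0
  simp at this
  linarith

lemma LB.isUnit {B : Matrix (Fin r) (Fin r) ℝ} {β : ℝ} (h : LB B β) (hβ : 0 < β) :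
    IsUnit B.det := by
  apply isUnit_of_inj
  intro Z hZ
  have := h 1 Z
  rw [hZ] at this
  have h0 : frob (0 : Matrix (Fin r) (Fin 1) ℝ) = 0 := by simp [frob]
  rw [h0] at this
  apply frob_eq_zero
  have := frob_nonneg Z
  nlinarith

lemma LB.add {B C : Matrix (Fin r) (Fin r) ℝ} {β c : ℝ} (h : LB B β) (hc : frob C ≤ c) :
    LB (B + C) (β - c) := by
  intro m Z
  have h1 := h m Z
  have h2 := frob_sub_le ((B + C) * Z) (C * Z)
  have h3 := frob_mul_le C Z
  have h4 : (B + C) * Z - C * Z = B * Z := by rw [Matrix.add_mul]; abel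
  rw [h4] at h2
  have := mul_le_mul_of_nonneg_right hc (frob_nonneg Z)
  linarith

lemma LB.mono {B : Matrix (Fin r) (Fin r) ℝ} {β β' : ℝ} (h : LB B β) (hc : β' ≤ β) :
    LB B β' := by
  intro m Z
  exact (mul_le_mul_of_nonneg_right hc (frob_nonneg Z)).trans (h m Z)

lemma LB_diag {s : Fin r → ℝ} {σ : ℝ} (hσ : 0 ≤ σ) (hs : ∀ k, σ ≤ s k) :
    LB (Matrix.diagonal s) σ := by
  intro m Z
  apply le_of_sq_le_sq _ (frob_nonneg _)
  rw [mul_pow, frob_sq, frob_sq, Finset.mul_sum]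
  refine Finset.sum_le_sum fun i _ => ?_
  rw [Finset.mul_sum]
  refine Finset.sum_le_sum fun j _ => ?_
  rw [Matrix.diagonal_mul, mul_pow]
  have := hs i
  gcongr

/-- Norm of a product through an inverse. -/
lemma frob_through_inv {B : Matrix (Fin r) (Fin r) ℝ} {β : ℝ} (h : LB B β) (hβ : 0 < β)
    (G : Matrix (Fin n) (Fin r) ℝ) (H : Matrix (Fin r) (Fin m) ℝ) :
    β * frob (G * B⁻¹ * H) ≤ frob G * frob H := by
  have hu := h.isUnit hβ
  have h1 := h m (B⁻¹ * H)
  rw [← Matrix.mul_assoc, Matrix.mul_nonsing_inv _ hu, Matrix.one_mul] at h1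
  have h2 := frob_mul_le G (B⁻¹ * H)
  rw [← Matrix.mul_assoc] at h2
  have := mul_le_mul_of_nonneg_left h1 (frob_nonneg G)
  nlinarith

/-- Schur-complement identity for matrices of rank at most `r`. -/
lemma schur {n₁ n₂ : ℕ} (U : Matrix (Fin n₁) (Fin r) ℝ) (V : Matrix (Fin n₂) (Fin r) ℝ)
    (G : Matrix (Fin n₁) (Fin r) ℝ) (H : Matrix (Fin r) (Fin n₂) ℝ)
    (hu : IsUnit (Uᵀ * (G * H) * V).det) :
    (G * H * V) * (Uᵀ * (G * H) * V)⁻¹ * (Uᵀ * (G * H)) = G * H := by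
  have e : Uᵀ * (G * H) * V = (Uᵀ * G) * (H * V) := by simp only [Matrix.mul_assoc]
  rw [e] at hu ⊢
  rw [Matrix.det_mul, IsUnit.mul_iff] at hu
  rw [Matrix.mul_inv_rev]
  calc G * H * V * ((H * V)⁻¹ * (Uᵀ * G)⁻¹) * (Uᵀ * (G * H))
      = G * ((H * V) * (H * V)⁻¹) * ((Uᵀ * G)⁻¹ * (Uᵀ * G)) * H := by
        simp only [Matrix.mul_assoc]
    _ = G * H := by
        rw [Matrix.mul_nonsing_inv _ hu.2, Matrix.nonsing_inv_mul _ hu.1]; simp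

end helpers
end RPCA

namespace RPCA
section threshold

lemma countP_map_univ {N : ℕ} (f : Fin N → ℝ) (p : ℝ → Prop) [DecidablePred p] :
    (((Finset.univ : Finset (Fin N)).val.map f).sort (· ≤ ·)).countP (fun x => decide (p x)) =
      ((Finset.univ : Finset (Fin N)).filter fun j => p (f j)).card := by
  rw [← Multiset.coe_countP, Multiset.sort_eq, Multiset.countP_map]
  rfl

lemma percentile_facts {N : ℕ} (hN : 0 < N) (f : Fin N → ℝ) {γ : ℝ} (h0 : 0 < γ) (h1 : γ < 1) :
    ((((Finset.univ : Finset (Fin N)).filter fun j =>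
        percentile γ ((Finset.univ : Finset (Fin N)).val.map f) < f j).card : ℝ) ≤ γ * N) ∧
    (γ * N ≤ (((Finset.univ : Finset (Fin N)).filter fun j =>
        percentile γ ((Finset.univ : Finset (Fin N)).val.map f) ≤ f j).card : ℝ)) := by
  set s := (Finset.univ : Finset (Fin N)).val.map f with hs
  have hc : s.card = N := by simp [hs]
  have hNr : (0 : ℝ) < N := by exact_mod_cast hN
  set p := percentile γ s with hp
  rw [← countP_map_univ f (fun x => p < x), ← countP_map_univ f (fun x => p ≤ x), ← hs]
  rw [percentile, hc] at hp
  set l := s.sort (· ≤ ·) with hl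
  have hlen : l.length = N := by simp [hl, hc]
  have hsort : l.Pairwise (· ≤ ·) := Multiset.pairwise_sort _ _
  set k := ⌈γ * (N : ℝ)⌉₊ with hk
  have hk1 : 1 ≤ k := Nat.one_le_iff_ne_zero.mpr (by
    have : 0 < k := Nat.ceil_pos.mpr (by positivity)
    omega)
  have hkN : k ≤ N := Nat.ceil_le.mpr (by nlinarith)
  have hk2 : γ * N ≤ k := Nat.le_ceil _
  have hk3 : (k : ℝ) < γ * N + 1 := Nat.ceil_lt_add_one (by positivity)
  have hidx : N - k < l.length := by omega
  rw [List.getD_eq_getElem _ _ hidx] at hp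
  have hmono : ∀ (i j : ℕ) (hi : i < l.length) (hj : j < l.length), i ≤ j → l[i] ≤ l[j] := by
    intro i j hi hj hij
    rcases hij.lt_or_eq with h | h
    · exact List.pairwise_iff_getElem.mp hsort i j hi hj h
    · subst h; exact le_rfl
  constructor
  · have e : l.countP (fun x => decide (p < x)) ≤ k - 1 := by
      rw [← List.take_append_drop (N - k + 1) l, List.countP_append]
      have z : (l.take (N - k + 1)).countP (fun x => decide (p < x)) = 0 := by
        rw [List.countP_eq_zero]
        intro x hx
        obtain ⟨i, hi, rfl⟩ := List.getElem_of_mem hx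
        simp only [List.length_take] at hi
        rw [List.getElem_take]
        simp only [decide_eq_true_eq, not_lt]
        rw [hp]
        exact hmono _ _ _ _ (by omega)
      have z2 := List.countP_le_length (p := fun x => decide (p < x)) (l := l.drop (N - k + 1))
      rw [List.length_drop] at z2
      omega
    have e2 : ((l.countP (fun x => decide (p < x)) : ℕ) : ℝ) + 1 ≤ k := by
      have : l.countP (fun x => decide (p < x)) + 1 ≤ k := by omega
      exact_mod_cast this
    linarith
  · have e : k ≤ l.countP (fun x => decide (p ≤ x)) := by
      rw [← List.take_append_drop (N - k) l, List.countP_append]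
      have z : (l.drop (N - k)).countP (fun x => decide (p ≤ x)) = (l.drop (N - k)).length := by
        rw [List.countP_eq_length]
        intro x hx
        obtain ⟨i, hi, rfl⟩ := List.getElem_of_mem hx
        simp only [List.length_drop] at hi
        rw [List.getElem_drop]
        simp only [decide_eq_true_eq]
        rw [hp]
        exact hmono _ _ _ _ (by omega)
      rw [z, List.length_drop]
      omega
    have : (k : ℝ) ≤ ((l.countP (fun x => decide (p ≤ x)) : ℕ) : ℝ) := by exact_mod_cast e
    linarith

/-- An entry below the percentile of the corrupted vector `e - s` is controlled by `e`. -/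
lemma percentile_bound {N : ℕ} (hN : 0 < N) (e s : Fin N → ℝ) {γ γs x : ℝ} (h0 : 0 < γ)
    (h1 : γ < 1) (hs : (((Finset.univ : Finset (Fin N)).filter fun j => s j ≠ 0).card : ℝ) ≤ γs * N)
    (hx : |x| ≤ percentile γ ((Finset.univ : Finset (Fin N)).val.map fun j => |e j - s j|)) :
    (γ - γs) * N * x ^ 2 ≤ ∑ j, e j ^ 2 := by
  set p := percentile γ ((Finset.univ : Finset (Fin N)).val.map fun j => |e j - s j|) with hp
  have h2 := (percentile_facts hN (fun j => |e j - s j|) h0 h1).2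
  rw [← hp] at h2
  set A := (Finset.univ : Finset (Fin N)).filter fun j => p ≤ |e j - s j|
  set B := (Finset.univ : Finset (Fin N)).filter fun j => s j ≠ 0
  have hcard : (A.card : ℝ) ≤ (A \ B).card + B.card := by
    have : A.card ≤ (A \ B).card + B.card := by
      have := Finset.le_card_sdiff B A
      omega
    exact_mod_cast this
  have hx2 : x ^ 2 ≤ p ^ 2 := by
    rw [← sq_abs x]
    exact pow_le_pow_left₀ (abs_nonneg _) hx 2
  calc (γ - γs) * N * x ^ 2 ≤ (A \ B).card * x ^ 2 := by
        apply mul_le_mul_of_nonneg_right _ (sq_nonneg _)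
        linarith
    _ = ∑ j ∈ A \ B, x ^ 2 := by rw [Finset.sum_const, nsmul_eq_mul]
    _ ≤ ∑ j ∈ A \ B, e j ^ 2 := by
        refine Finset.sum_le_sum fun j hj => ?_
        simp only [A, B, Finset.mem_sdiff, Finset.mem_filter, Finset.mem_univ, true_and,
          not_not] at hj
        have h3 := hj.1
        rw [hj.2, sub_zero] at h3
        rw [← sq_abs x, ← sq_abs (e j)]
        exact pow_le_pow_left₀ (abs_nonneg _) (hx.trans h3) 2
    _ ≤ ∑ j, e j ^ 2 :=
        Finset.sum_le_sum_of_subset_of_nonneg (Finset.subset_univ _) fun _ _ _ => sq_nonneg _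

open Classical in
/-- Restriction of a matrix to a set of indices. -/
def restr {n m : ℕ} (Ω : Fin n → Fin m → Prop) (A : Matrix (Fin n) (Fin m) ℝ) :
    Matrix (Fin n) (Fin m) ℝ := Matrix.of fun i j => if Ω i j then A i j else 0

lemma restr_add {n m : ℕ} (Ω : Fin n → Fin m → Prop) (A B : Matrix (Fin n) (Fin m) ℝ) :
    restr Ω (A + B) = restr Ω A + restr Ω B := by
  ext i j
  simp only [restr, Matrix.of_apply, Matrix.add_apply]
  split_ifs <;> simp

lemma frob_restr_le {n m : ℕ} (Ω : Fin n → Fin m → Prop) (A : Matrix (Fin n) (Fin m) ℝ) :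
    frob (restr Ω A) ≤ frob A := by
  apply le_of_sq_le_sq _ (frob_nonneg _)
  rw [frob_sq, frob_sq]
  refine Finset.sum_le_sum fun i _ => Finset.sum_le_sum fun j _ => ?_
  simp only [restr, Matrix.of_apply]
  split_ifs
  · exact le_rfl
  · rw [zero_pow two_ne_zero]; positivity

open Classical in
lemma restr_incoherent {n m r : ℕ} (Ω : Fin n → Fin m → Prop) (U : Matrix (Fin n) (Fin r) ℝ)
    (H : Matrix (Fin r) (Fin m) ℝ) {c ν : ℝ} (hν : 0 ≤ ν)
    (hΩ : ∀ j, (((Finset.univ : Finset (Fin n)).filter fun i => Ω i j).card : ℝ) ≤ c)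
    (hU : ∀ i, ∑ k, (U i k) ^ 2 ≤ ν) :
    frob (restr Ω (U * H)) ^ 2 ≤ c * ν * frob H ^ 2 := by
  rw [frob_sq, frob_sq, Finset.sum_comm, Finset.sum_comm (s := (Finset.univ : Finset (Fin r))),
    Finset.mul_sum]
  refine Finset.sum_le_sum fun j _ => ?_
  have hh : 0 ≤ ∑ k, H k j ^ 2 := by positivity
  calc ∑ i, (restr Ω (U * H)) i j ^ 2
      ≤ ∑ i, (if Ω i j then ν * ∑ k, H k j ^ 2 else 0) := by
        refine Finset.sum_le_sum fun i _ => ?_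
        simp only [restr, Matrix.of_apply]
        split_ifs
        · rw [Matrix.mul_apply]
          exact (Finset.sum_mul_sq_le_sq_mul_sq _ _ _).trans
            (mul_le_mul_of_nonneg_right (hU i) hh)
        · simp
    _ = (((Finset.univ : Finset (Fin n)).filter fun i => Ω i j).card : ℝ) *
          (ν * ∑ k, H k j ^ 2) := by
        rw [← Finset.sum_filter, Finset.sum_const, nsmul_eq_mul]
    _ ≤ c * (ν * ∑ k, H k j ^ 2) := mul_le_mul_of_nonneg_right (hΩ j) (by positivity)
    _ = _ := by ring

/-- Decomposition of the thresholded residual. -/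
lemma thresh_decomp {n₁ n₂ : ℕ} (hn₁ : 0 < n₁) (hn₂ : 0 < n₂) {γ γs : ℝ} (h0 : 0 < γ) (h1 : γ < 1)
    (E S : Matrix (Fin n₁) (Fin n₂) ℝ) (hS : SparseSet γs S) :
    ∃ (Ω : Fin n₁ → Fin n₂ → Prop) (G : Matrix (Fin n₁) (Fin n₂) ℝ),
      hardThresh γ (E - S) - E = G - restr Ω E ∧
      (γ - γs) * frob G ^ 2 ≤ 2 * γs * frob E ^ 2 ∧
      (∀ (_ : ∀ i j, Decidable (Ω i j)) (i),
        (((Finset.univ : Finset (Fin n₂)).filter fun j => Ω i j).card : ℝ) ≤ (γ + γs) * n₂) ∧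
      (∀ (_ : ∀ i j, Decidable (Ω i j)) (j),
        (((Finset.univ : Finset (Fin n₁)).filter fun i => Ω i j).card : ℝ) ≤ (γ + γs) * n₁) := by
  classical
  set T : Fin n₁ → Fin n₂ → Prop := fun i j =>
    percentile γ (rowAbs (E - S) i) < |(E - S) i j| ∧
      percentile γ (colAbs (E - S) j) < |(E - S) i j| with hT
  have hn₁r : (0 : ℝ) < n₁ := by exact_mod_cast hn₁
  have hn₂r : (0 : ℝ) < n₂ := by exact_mod_cast hn₂
  refine ⟨fun i j => T i j ∨ S i j ≠ 0,
    restr (fun i j => ¬ T i j ∧ S i j ≠ 0) (E - S), ?_, ?_, ?_, ?_⟩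
  · ext i j
    have hh : hardThresh γ (E - S) i j = if T i j then 0 else (E - S) i j := by
      simp only [hardThresh, Matrix.of_apply, hT]
    simp only [Matrix.sub_apply, hh, restr, Matrix.of_apply]
    by_cases t : T i j <;> by_cases s : S i j = 0 <;> simp [t, s]
  · have key : ∀ i j, (γ - γs) * (restr (fun i j => ¬ T i j ∧ S i j ≠ 0) (E - S) i j) ^ 2 ≤
        (if S i j ≠ 0 then (∑ j', E i j' ^ 2) / n₂ else 0) +
        (if S i j ≠ 0 then (∑ i', E i' j ^ 2) / n₁ else 0) := by
      intro i j
      simp only [restr, Matrix.of_apply]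
      by_cases s : S i j = 0
      · simp [s]
      by_cases t : T i j
      · rw [if_neg (fun h => h.1 t), if_pos s, if_pos s]
        rw [zero_pow two_ne_zero, mul_zero]
        positivity
      rw [if_pos ⟨t, s⟩, if_pos s, if_pos s]
      have t' : |(E - S) i j| ≤ percentile γ (rowAbs (E - S) i) ∨
          |(E - S) i j| ≤ percentile γ (colAbs (E - S) j) := by
        by_contra hcon
        push Not at hcon
        exact t hcon
      have p1 : 0 ≤ (∑ j', E i j' ^ 2) / n₂ := by positivity
      have p2 : 0 ≤ (∑ i', E i' j ^ 2) / n₁ := by positivity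
      rcases t' with t' | t'
      · have := percentile_bound hn₂ (fun j => E i j) (fun j => S i j) h0 h1 (hS.1 i) t'
        have : (γ - γs) * (E - S) i j ^ 2 ≤ (∑ j', E i j' ^ 2) / n₂ := by
          rw [le_div_iff₀ hn₂r]; linarith
        linarith
      · have := percentile_bound hn₁ (fun i => E i j) (fun i => S i j) h0 h1 (hS.2 j) t'
        have : (γ - γs) * (E - S) i j ^ 2 ≤ (∑ i', E i' j ^ 2) / n₁ := by
          rw [le_div_iff₀ hn₁r]; linarith
        linarith
    have s1 : ∑ i, ∑ j, (if S i j ≠ 0 then (∑ j', E i j' ^ 2) / (n₂ : ℝ) else 0) ≤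
        γs * frob E ^ 2 := by
      rw [frob_sq, Finset.mul_sum]
      refine Finset.sum_le_sum fun i _ => ?_
      rw [← Finset.sum_filter, Finset.sum_const, nsmul_eq_mul, mul_div_assoc', div_le_iff₀ hn₂r]
      have := mul_le_mul_of_nonneg_right (hS.1 i) (show 0 ≤ ∑ j', E i j' ^ 2 by positivity)
      linarith
    have s2 : ∑ i, ∑ j, (if S i j ≠ 0 then (∑ i', E i' j ^ 2) / (n₁ : ℝ) else 0) ≤
        γs * frob E ^ 2 := by
      rw [frob_sq, Finset.sum_comm, Finset.sum_comm (f := fun i j => E i j ^ 2), Finset.mul_sum]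
      refine Finset.sum_le_sum fun j _ => ?_
      rw [← Finset.sum_filter, Finset.sum_const, nsmul_eq_mul, mul_div_assoc', div_le_iff₀ hn₁r]
      have := mul_le_mul_of_nonneg_right (hS.2 j) (show 0 ≤ ∑ i', E i' j ^ 2 by positivity)
      linarith
    have s3 := Finset.sum_le_sum fun i (_ : i ∈ Finset.univ) =>
      Finset.sum_le_sum fun j (_ : j ∈ Finset.univ) => key i j
    simp only [Finset.sum_add_distrib, ← Finset.mul_sum] at s3
    rw [← frob_sq] at s3
    linarith
  · intro inst i
    have h2 := (percentile_facts hn₂ (fun j => |(E - S) i j|) h0 h1).1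
    have h3 := hS.1 i
    have hsub : ((Finset.univ : Finset (Fin n₂)).filter fun j => T i j ∨ S i j ≠ 0) ⊆
        ((Finset.univ : Finset (Fin n₂)).filter fun j =>
          percentile γ (rowAbs (E - S) i) < |(E - S) i j|) ∪
        ((Finset.univ : Finset (Fin n₂)).filter fun j => S i j ≠ 0) := by
      intro j hj
      simp only [Finset.mem_filter, Finset.mem_univ, true_and, Finset.mem_union] at hj ⊢
      exact hj.imp (fun h => h.1) id
    have h4 := (Finset.card_le_card hsub).trans (Finset.card_union_le _ _)
    have h5 : (((Finset.univ : Finset (Fin n₂)).filter fun j => T i j ∨ S i j ≠ 0).card : ℝ) ≤ _ :=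
      Nat.cast_le.mpr h4
    rw [Nat.cast_add] at h5
    have h6 := h5.trans (add_le_add h2 h3)
    rw [add_mul]
    convert h6
  · intro inst j
    have h2 := (percentile_facts hn₁ (fun i => |(E - S) i j|) h0 h1).1
    have h3 := hS.2 j
    have hsub : ((Finset.univ : Finset (Fin n₁)).filter fun i => T i j ∨ S i j ≠ 0) ⊆
        ((Finset.univ : Finset (Fin n₁)).filter fun i =>
          percentile γ (colAbs (E - S) j) < |(E - S) i j|) ∪
        ((Finset.univ : Finset (Fin n₁)).filter fun i => S i j ≠ 0) := by
      intro j hj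
      simp only [Finset.mem_filter, Finset.mem_univ, true_and, Finset.mem_union] at hj ⊢
      exact hj.imp (fun h => h.2) id
    have h4 := (Finset.card_le_card hsub).trans (Finset.card_union_le _ _)
    have h5 : (((Finset.univ : Finset (Fin n₁)).filter fun i => T i j ∨ S i j ≠ 0).card : ℝ) ≤ _ :=
      Nat.cast_le.mpr h4
    rw [Nat.cast_add] at h5
    have h6 := h5.trans (add_le_add h2 h3)
    rw [add_mul]
    convert h6

end threshold
end RPCA

namespace RPCA
section geometry

variable {n₁ n₂ r : ℕ}

lemma weyl_aux {Ls X : Matrix (Fin n₁) (Fin n₂) ℝ} {Us : Matrix (Fin n₁) (Fin r) ℝ}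
    {ss : Fin r → ℝ} {Vs : Matrix (Fin n₂) (Fin r) ℝ} (hs : IsThinSVD Ls Us ss Vs)
    {σ : ℝ} (hσ : 0 ≤ σ) (hss : ∀ k, σ ≤ ss k) {m : ℕ} (Y : Matrix (Fin r) (Fin m) ℝ) :
    (σ - frob (X - Ls)) * frob Y ≤ frob (X * Vs * Y) := by
  obtain ⟨hU, hV, -, -, hL⟩ := hs
  have h1 : Ls * Vs * Y = Us * (Matrix.diagonal ss * Y) := by
    rw [hL]
    simp only [Matrix.mul_assoc]
    rw [← Matrix.mul_assoc Vsᵀ, hV, Matrix.one_mul]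
  have h2 := LB_diag hσ hss m Y
  rw [← frob_iso hU (Matrix.diagonal ss * Y), ← h1] at h2
  have h3 : Ls * Vs * Y = X * Vs * Y - (X - Ls) * Vs * Y := by
    rw [Matrix.sub_mul, Matrix.sub_mul]; abel
  have h4 := frob_sub_le (X * Vs * Y) ((X - Ls) * Vs * Y)
  rw [← h3] at h4
  have h5 := frob_mul_le ((X - Ls) * Vs) Y
  have h6 := mul_le_mul_of_nonneg_right (frob_mulV hV (X - Ls)) (frob_nonneg Y)
  linarith

lemma weyl {Ls X : Matrix (Fin n₁) (Fin n₂) ℝ} {Us U : Matrix (Fin n₁) (Fin r) ℝ}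
    {ss s : Fin r → ℝ} {Vs V : Matrix (Fin n₂) (Fin r) ℝ} (hs : IsThinSVD Ls Us ss Vs)
    (hX : IsThinSVD X U s V)
    {σ : ℝ} (hσ : 0 ≤ σ) (hss : ∀ k, σ ≤ ss k) (he : frob (X - Ls) < σ) :
    LB (Matrix.diagonal s) (σ - frob (X - Ls)) := by
  obtain ⟨hU, hV, -, -, hXe⟩ := hX
  set Q := Vᵀ * Vs with hQ
  have h1 : ∀ {m : ℕ} (Y : Matrix (Fin r) (Fin m) ℝ),
      X * Vs * Y = U * (Matrix.diagonal s * (Q * Y)) := by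
    intro m Y
    rw [hXe, hQ]
    simp only [Matrix.mul_assoc]
  have h2 : ∀ {m : ℕ} (Y : Matrix (Fin r) (Fin m) ℝ),
      (σ - frob (X - Ls)) * frob Y ≤ frob (Matrix.diagonal s * (Q * Y)) := by
    intro m Y
    have := weyl_aux (X := X) hs hσ hss Y
    rwa [h1, frob_iso hU] at this
  have hu : IsUnit Q.det := by
    apply isUnit_of_inj
    intro Z hZ
    have h3 := h2 Z
    rw [hZ, Matrix.mul_zero] at h3
    have h0 : frob (0 : Matrix (Fin r) (Fin 1) ℝ) = 0 := by simp [frob]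
    rw [h0] at h3
    apply frob_eq_zero
    have := frob_nonneg Z
    nlinarith
  intro m Z
  have h3 := h2 (Q⁻¹ * Z)
  rw [← Matrix.mul_assoc Q, Matrix.mul_nonsing_inv _ hu, Matrix.one_mul] at h3
  refine le_trans ?_ h3
  apply mul_le_mul_of_nonneg_left _ (by linarith)
  have h4 : Z = Q * (Q⁻¹ * Z) := by
    rw [← Matrix.mul_assoc Q, Matrix.mul_nonsing_inv _ hu, Matrix.one_mul]
  calc frob Z = frob (Vᵀ * (Vs * (Q⁻¹ * Z))) := by
        conv_lhs => rw [h4, hQ, Matrix.mul_assoc]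
    _ ≤ frob (Vs * (Q⁻¹ * Z)) := frob_Ut hV _
    _ = frob (Q⁻¹ * Z) := frob_iso hs.2.1 _

lemma tangentProj_eq (U : Matrix (Fin n₁) (Fin r) ℝ) (V : Matrix (Fin n₂) (Fin r) ℝ)
    (D : Matrix (Fin n₁) (Fin n₂) ℝ) :
    tangentProj U V D = D - (1 - U * Uᵀ) * D * (1 - V * Vᵀ) := by
  rw [tangentProj, Matrix.sub_mul, Matrix.one_mul, Matrix.mul_sub, Matrix.mul_one,
    Matrix.sub_mul]
  abel

lemma perp_left {X : Matrix (Fin n₁) (Fin n₂) ℝ} {U : Matrix (Fin n₁) (Fin r) ℝ}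
    {s : Fin r → ℝ} {V : Matrix (Fin n₂) (Fin r) ℝ} (hX : IsThinSVD X U s V) :
    (1 - U * Uᵀ) * X = 0 := by
  obtain ⟨hU, hV, -, -, hXe⟩ := hX
  rw [hXe, Matrix.mul_assoc U, ← Matrix.mul_assoc, perp_mul hU, Matrix.zero_mul]

lemma perp_right {X : Matrix (Fin n₁) (Fin n₂) ℝ} {U : Matrix (Fin n₁) (Fin r) ℝ}
    {s : Fin r → ℝ} {V : Matrix (Fin n₂) (Fin r) ℝ} (hX : IsThinSVD X U s V) :
    X * (1 - V * Vᵀ) = 0 := by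
  obtain ⟨hU, hV, -, -, hXe⟩ := hX
  rw [hXe, Matrix.mul_assoc, mul_perp hV, Matrix.mul_zero]

/-- Normal component of the error at the iterate. -/
lemma normal_bound {Ls X : Matrix (Fin n₁) (Fin n₂) ℝ} {Us U : Matrix (Fin n₁) (Fin r) ℝ}
    {ss s : Fin r → ℝ} {Vs V : Matrix (Fin n₂) (Fin r) ℝ} (hs : IsThinSVD Ls Us ss Vs)
    (hX : IsThinSVD X U s V)
    {σ : ℝ} (hσ : 0 ≤ σ) (hss : ∀ k, σ ≤ ss k) :
    σ * frob ((1 - U * Uᵀ) * (X - Ls) * (1 - V * Vᵀ)) ≤ frob (X - Ls) ^ 2 := by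
  have pl := perp_left hX
  have pr := perp_right hX
  obtain ⟨hU, hV, -, -, hXe⟩ := hX
  obtain ⟨hUs, hVs, -, -, hL⟩ := hs
  have hLV : Ls * Vs * Vsᵀ = Ls := by
    rw [hL]; simp only [Matrix.mul_assoc]
    rw [← Matrix.mul_assoc Vsᵀ, hVs, Matrix.one_mul]
  have e1 : (1 - U * Uᵀ) * (X - Ls) = - ((1 - U * Uᵀ) * Ls) := by
    rw [Matrix.mul_sub, pl, zero_sub]
  have e2 : (1 - U * Uᵀ) * (X - Ls) * (1 - V * Vᵀ)
      = ((1 - U * Uᵀ) * ((X - Ls) * Vs)) * (Vsᵀ * (1 - V * Vᵀ)) := by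
    rw [← Matrix.mul_assoc (1 - U * Uᵀ), e1]
    conv_lhs => rw [← hLV]
    simp only [Matrix.mul_assoc, Matrix.neg_mul]
  have e3 : Matrix.diagonal ss * (Vsᵀ * (1 - V * Vᵀ)) = Usᵀ * ((Ls - X) * (1 - V * Vᵀ)) := by
    rw [Matrix.sub_mul Ls, pr, sub_zero, hL]
    simp only [Matrix.mul_assoc]
    rw [← Matrix.mul_assoc Usᵀ, hUs, Matrix.one_mul]
  have h1 := LB_diag hσ hss _ (Vsᵀ * (1 - V * Vᵀ))
  rw [e3] at h1
  have h2 := frob_Ut hUs ((Ls - X) * (1 - V * Vᵀ))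
  have h3 := frob_mulperp hV (Ls - X)
  have h4 : frob (Ls - X) = frob (X - Ls) := by rw [← frob_neg, neg_sub]
  have h5 := frob_mul_le ((1 - U * Uᵀ) * ((X - Ls) * Vs)) (Vsᵀ * (1 - V * Vᵀ))
  have h6 := (frob_perp hU ((X - Ls) * Vs)).trans (frob_mulV hVs _)
  rw [e2]
  calc σ * frob (((1 - U * Uᵀ) * ((X - Ls) * Vs)) * (Vsᵀ * (1 - V * Vᵀ)))
      ≤ σ * (frob ((1 - U * Uᵀ) * ((X - Ls) * Vs)) * frob (Vsᵀ * (1 - V * Vᵀ))) :=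
        mul_le_mul_of_nonneg_left h5 hσ
    _ = frob ((1 - U * Uᵀ) * ((X - Ls) * Vs)) * (σ * frob (Vsᵀ * (1 - V * Vᵀ))) := by ring
    _ ≤ frob (X - Ls) * frob (X - Ls) :=
        mul_le_mul h6 (by linarith) (mul_nonneg hσ (frob_nonneg _)) (frob_nonneg _)
    _ = _ := by ring

/-- Normal component of the error at the ground truth. -/
lemma normal_bound_star {Ls X : Matrix (Fin n₁) (Fin n₂) ℝ} {Us U : Matrix (Fin n₁) (Fin r) ℝ}
    {ss s : Fin r → ℝ} {Vs V : Matrix (Fin n₂) (Fin r) ℝ} (hs : IsThinSVD Ls Us ss Vs)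
    (hX : IsThinSVD X U s V)
    {σ : ℝ} (hσ : 0 ≤ σ) (hss : ∀ k, σ ≤ ss k) (he : frob (X - Ls) < σ) :
    (σ - frob (X - Ls)) * frob ((1 - Us * Usᵀ) * (X - Ls) * (1 - Vs * Vsᵀ)) ≤
      frob (X - Ls) ^ 2 / 2 := by
  have pl := perp_left hs
  have pr := perp_right hs
  obtain ⟨hUs, hVs, -, -, hL⟩ := hs
  set E := X - Ls with hE
  set B := Usᵀ * X * Vs with hB
  have hBE : B = Matrix.diagonal ss + Usᵀ * E * Vs := by
    rw [hB, show X = Ls + E by rw [hE]; abel, Matrix.mul_add, Matrix.add_mul]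
    congr 1
    rw [hL]
    simp only [Matrix.mul_assoc]
    rw [hVs, Matrix.mul_one, ← Matrix.mul_assoc, hUs, Matrix.one_mul]
  have hBLB : LB B (σ - frob E) := by
    rw [hBE]
    exact (LB_diag hσ hss).add ((frob_mulV hVs _).trans (frob_Ut hUs _))
  have hpos : 0 < σ - frob E := by linarith
  have hfac : X = (U * Matrix.diagonal s) * Vᵀ := hX.2.2.2.2
  have hsch : X * Vs * B⁻¹ * (Usᵀ * X) = X := by
    have hu := hBLB.isUnit hpos
    rw [hB] at hu ⊢
    rw [hfac] at hu ⊢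
    exact schur Us Vs _ _ hu
  have hEX1 : (1 - Us * Usᵀ) * X = (1 - Us * Usᵀ) * E := by
    rw [hE, Matrix.mul_sub, pl, sub_zero]
  have hEX2 : X * (1 - Vs * Vsᵀ) = E * (1 - Vs * Vsᵀ) := by
    rw [hE, Matrix.sub_mul, pr, sub_zero]
  have e : (1 - Us * Usᵀ) * E * (1 - Vs * Vsᵀ) =
      ((1 - Us * Usᵀ) * E * Vs) * B⁻¹ * (Usᵀ * (E * (1 - Vs * Vsᵀ))) := by
    rw [← hEX1, ← hEX2]
    conv_lhs => rw [← hsch]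
    simp only [Matrix.mul_assoc]
  rw [e]
  refine (frob_through_inv hBLB hpos _ _).trans ?_
  have q1 := frob_mulV hVs ((1 - Us * Usᵀ) * E)
  have q2 : frob (Usᵀ * (E * (1 - Vs * Vsᵀ))) ≤ frob (Usᵀ * E) := by
    rw [← Matrix.mul_assoc]; exact frob_mulperp hVs _
  have q3 := pyth hUs E
  have q4 := mul_le_mul q1 q2 (frob_nonneg _) (frob_nonneg _)
  nlinarith [sq_nonneg (frob (Usᵀ * E) - frob ((1 - Us * Usᵀ) * E))]

/-- Second-order bound for the orthographic retraction. -/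
lemma retract_bound {X δ : Matrix (Fin n₁) (Fin n₂) ℝ} {U : Matrix (Fin n₁) (Fin r) ℝ}
    {s : Fin r → ℝ} {V : Matrix (Fin n₂) (Fin r) ℝ} (hX : IsThinSVD X U s V) {β : ℝ}
    (hLB : LB (Matrix.diagonal s) β) (hδ : frob δ < β)
    (hT : (1 - U * Uᵀ) * δ * (1 - V * Vᵀ) = 0) :
    (β - frob δ) * frob (X + δ - orthoRetract U V (X + δ)) ≤ frob δ ^ 2 := by
  have pl := perp_left hX
  have pr := perp_right hX
  obtain ⟨hU, hV, -, -, hXe⟩ := hX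
  set M := X + δ with hM
  set B := Uᵀ * M * V with hB
  have hBE : B = Matrix.diagonal s + Uᵀ * δ * V := by
    rw [hB, hM, Matrix.mul_add, Matrix.add_mul]
    congr 1
    rw [hXe]
    simp only [Matrix.mul_assoc]
    rw [hV, Matrix.mul_one, ← Matrix.mul_assoc, hU, Matrix.one_mul]
  have hBLB : LB B (β - frob δ) := by
    rw [hBE]
    exact hLB.add ((frob_mulV hV _).trans (frob_Ut hU _))
  have hpos : 0 < β - frob δ := by linarith
  have hu := hBLB.isUnit hpos
  set R := orthoRetract U V M with hR
  have hRd : R = M * V * B⁻¹ * (Uᵀ * M) := rfl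
  have hUR : Uᵀ * R = Uᵀ * M := by
    rw [hRd]
    calc Uᵀ * (M * V * B⁻¹ * (Uᵀ * M)) = (Uᵀ * M * V) * B⁻¹ * (Uᵀ * M) := by
          simp only [Matrix.mul_assoc]
      _ = _ := by rw [← hB, Matrix.mul_nonsing_inv _ hu, Matrix.one_mul]
  have hRV : R * V = M * V := by
    rw [hRd]
    calc (M * V * B⁻¹ * (Uᵀ * M)) * V = M * V * (B⁻¹ * (Uᵀ * M * V)) := by
          simp only [Matrix.mul_assoc]
      _ = _ := by rw [← hB, Matrix.nonsing_inv_mul _ hu, Matrix.mul_one]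
  have hd1 : (1 - U * Uᵀ) * (M - R) = M - R := by
    rw [Matrix.sub_mul, Matrix.one_mul, Matrix.mul_assoc, Matrix.mul_sub, hUR]; simp
  have hd2 : (M - R) * (1 - V * Vᵀ) = M - R := by
    rw [Matrix.mul_sub, Matrix.mul_one, ← Matrix.mul_assoc, Matrix.sub_mul, hRV]; simp
  have hM1 : (1 - U * Uᵀ) * M = (1 - U * Uᵀ) * δ := by
    rw [hM, Matrix.mul_add, pl, zero_add]
  have hM2 : M * (1 - V * Vᵀ) = δ * (1 - V * Vᵀ) := by
    rw [hM, Matrix.add_mul, pr, zero_add]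
  have e : M - R = - (((1 - U * Uᵀ) * δ * V) * B⁻¹ * (Uᵀ * (δ * (1 - V * Vᵀ)))) := by
    rw [← hd2, ← hd1, Matrix.mul_sub _ M R, Matrix.sub_mul ((1 - U * Uᵀ) * M), hM1, hT, zero_sub, ← hM1, ← hM2, hRd]
    simp only [Matrix.mul_assoc]
  rw [e, frob_neg]
  refine (frob_through_inv hBLB hpos _ _).trans ?_
  have q1 := (frob_mulV hV ((1 - U * Uᵀ) * δ)).trans (frob_perp hU δ)
  have q2 := (frob_Ut hU (δ * (1 - V * Vᵀ))).trans (frob_mulperp hV δ)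
  have q4 := mul_le_mul q1 q2 (frob_nonneg _) (frob_nonneg _)
  linarith

lemma rank_orthoRetract (U : Matrix (Fin n₁) (Fin r) ℝ) (V : Matrix (Fin n₂) (Fin r) ℝ)
    (M : Matrix (Fin n₁) (Fin n₂) ℝ) : (orthoRetract U V M).rank ≤ r := by
  rw [orthoRetract]
  refine (Matrix.rank_mul_le_right _ _).trans ?_
  refine (Matrix.rank_le_card_height _).trans ?_
  simp

/-- The tangent space does not depend on the chosen thin SVD. -/
lemma tangent_indep {X : Matrix (Fin n₁) (Fin n₂) ℝ} {U U' : Matrix (Fin n₁) (Fin r) ℝ}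
    {s s' : Fin r → ℝ} {V V' : Matrix (Fin n₂) (Fin r) ℝ} (hX : IsThinSVD X U s V)
    (hX' : IsThinSVD X U' s' V') (D : Matrix (Fin n₁) (Fin n₂) ℝ) :
    (1 - U' * U'ᵀ) * tangentProj U V D * (1 - V' * V'ᵀ) = 0 := by
  have pl := perp_left hX'
  have pr := perp_right hX'
  obtain ⟨hU, hV, -, hs, hXe⟩ := hX
  have hd : IsUnit (Matrix.diagonal s).det := by
    rw [Matrix.det_diagonal, isUnit_iff_ne_zero]
    exact Finset.prod_ne_zero_iff.mpr fun k _ => (hs k).ne'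
  have h1 : (1 - U' * U'ᵀ) * U = 0 := by
    have : U = X * V * (Matrix.diagonal s)⁻¹ := by
      rw [hXe, Matrix.mul_assoc _ Vᵀ, hV, Matrix.mul_one, Matrix.mul_assoc,
        Matrix.mul_nonsing_inv _ hd, Matrix.mul_one]
    rw [this, ← Matrix.mul_assoc, ← Matrix.mul_assoc, pl, Matrix.zero_mul, Matrix.zero_mul]
  have h2 : Vᵀ * (1 - V' * V'ᵀ) = 0 := by
    have : Vᵀ = (Matrix.diagonal s)⁻¹ * (Uᵀ * X) := by
      rw [hXe, Matrix.mul_assoc U, ← Matrix.mul_assoc Uᵀ, hU, Matrix.one_mul, ← Matrix.mul_assoc,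
        Matrix.nonsing_inv_mul _ hd, Matrix.one_mul]
    rw [this, Matrix.mul_assoc, Matrix.mul_assoc, pr, Matrix.mul_zero, Matrix.mul_zero]
  have t1 : (1 - U' * U'ᵀ) * (U * Uᵀ * D) = 0 := by
    rw [Matrix.mul_assoc U, ← Matrix.mul_assoc, h1, Matrix.zero_mul]
  have t2 : (D * (V * Vᵀ)) * (1 - V' * V'ᵀ) = 0 := by
    rw [Matrix.mul_assoc, Matrix.mul_assoc V, h2, Matrix.mul_zero, Matrix.mul_zero]
  rw [tangentProj, Matrix.mul_sub _ (U * Uᵀ * D + D * (V * Vᵀ)), Matrix.mul_add, t1, zero_add, ← Matrix.mul_assoc _ (U * Uᵀ * D),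
    t1, Matrix.zero_mul, sub_zero, Matrix.mul_assoc, t2, Matrix.mul_zero]

end geometry
end RPCA

namespace RPCA
section step

variable {n₁ n₂ r : ℕ}

lemma dims_pos (hr : 0 < r) {U : Matrix (Fin n₁) (Fin r) ℝ} (hU : Uᵀ * U = 1) : 0 < n₁ := by
  rcases Nat.eq_zero_or_pos n₁ with h | h
  · subst h
    have := congrFun (congrFun hU ⟨0, hr⟩) ⟨0, hr⟩
    simp [Matrix.mul_apply] at this
  · exact h

lemma mu_nonneg (hr : 0 < r) {U : Matrix (Fin n₁) (Fin r) ℝ} (hU : Uᵀ * U = 1) {μc : ℝ}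
    (h : ∀ i, Real.sqrt (∑ k, (U i k) ^ 2) ≤ Real.sqrt (μc * r / n₁)) : 0 ≤ μc := by
  by_contra hneg
  push Not at hneg
  have hz : Real.sqrt (μc * r / n₁) = 0 := by
    apply Real.sqrt_eq_zero_of_nonpos
    apply div_nonpos_of_nonpos_of_nonneg _ (Nat.cast_nonneg _)
    exact mul_nonpos_of_nonpos_of_nonneg hneg.le (Nat.cast_nonneg _)
  have hU0 : ∀ i k, U i k = 0 := by
    intro i k
    have h1 := h i
    rw [hz] at h1
    have h2 := Real.sqrt_eq_zero'.mp (le_antisymm h1 (Real.sqrt_nonneg _))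
    have h3 := Finset.single_le_sum (f := fun k => (U i k) ^ 2) (fun _ _ => sq_nonneg _)
      (Finset.mem_univ k)
    have : U i k ^ 2 = 0 := le_antisymm (h3.trans h2) (sq_nonneg _)
    simpa using this
  have := congrFun (congrFun hU ⟨0, hr⟩) ⟨0, hr⟩
  simp [Matrix.mul_apply, hU0] at this

lemma arith_cs (x y g : ℝ) : (x + y + g) ^ 2 ≤ 2 * (2 * x ^ 2 + 2 * g ^ 2 + y ^ 2) := by
  nlinarith [sq_nonneg (y - (x + g)), sq_nonneg (x - g)]

lemma arith_descent {C e p w t : ℝ} (hC0 : 0 ≤ C) (hC : C < 1 / 2) (he : 0 ≤ e)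
    (hp : 0.86 * e ≤ p) (hw : w ≤ 1.415 * C * e) (ht : -(p * w) ≤ t) :
    (1 - 2 * C) / 4 * e ^ 2 ≤ p ^ 2 + t := by
  have p0 : 0 ≤ p := by linarith
  have hCe : C * e ≤ 1 / 2 * e := mul_le_mul_of_nonneg_right hC.le he
  have h2 : p * w ≤ p * (1.415 * C * e) := mul_le_mul_of_nonneg_left hw p0
  have h3 : 0 ≤ (p - 0.86 * e) * (p + 0.86 * e - 1.415 * C * e) := by
    apply mul_nonneg (by linarith)
    nlinarith
  have h4 : 0 ≤ (0.86 * 0.86 - 0.86 * 1.415 * C - (1 - 2 * C) / 4) * e ^ 2 :=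
    mul_nonneg (by linarith) (sq_nonneg e)
  nlinarith

lemma arith_step {c e η f t : ℝ} (hη : 0 < η) (hf : c * e ^ 2 ≤ f) (ht0 : 0 ≤ t)
    (ht : t ≤ 2 * e) :
    e ^ 2 - 2 * (η * f) + (η * t) ^ 2 ≤ ((1 - c * η + 2 * η ^ 2) * e) ^ 2 := by
  have h1 := mul_le_mul_of_nonneg_left hf hη.le
  have h2 := pow_le_pow_left₀ ht0 ht 2
  have h3 := mul_le_mul_of_nonneg_left h2 (sq_nonneg η)
  have h4 : 0 ≤ ((-c * η + 2 * η ^ 2) * e) ^ 2 := sq_nonneg _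
  have h5 : ((1 - c * η + 2 * η ^ 2) * e) ^ 2 =
      e ^ 2 - 2 * (η * (c * e ^ 2)) + η ^ 2 * (2 * e) ^ 2 + ((-c * η + 2 * η ^ 2) * e) ^ 2 := by
    ring
  rw [h5, mul_pow]
  linarith

set_option maxHeartbeats 2000000 in
lemma gradient_error (hr : 0 < r) {μc γ γs a C₁ σ : ℝ}
    {Ls S X : Matrix (Fin n₁) (Fin n₂) ℝ} {Us U : Matrix (Fin n₁) (Fin r) ℝ}
    {ss s : Fin r → ℝ} {Vs V : Matrix (Fin n₂) (Fin r) ℝ} (hs : IsThinSVD Ls Us ss Vs)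
    (hinc : Incoherent μc Us Vs) (hS : SparseSet γs S) (hX : IsThinSVD X U s V)
    (hγ0 : 0 < γ) (hγ1 : γ < 1) (ha : a ≤ 1 / 2) (hγ : γ > 2 * γs)
    (hC₁ : C₁ = Real.sqrt (4 * (γ + 2 * γs) * μc * r + 4 * γs / (γ - γs) + a ^ 2))
    (hσ : 0 < σ) (hss : ∀ k, σ ≤ ss k) (he : frob (X - Ls) ≤ a * σ) :
    frob (hardThresh γ (X - Ls - S) - (X - Ls)) ^ 2 ≤ 2 * C₁ ^ 2 * frob (X - Ls) ^ 2 := by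
  have hn₁ := dims_pos hr hs.1
  have hn₂ := dims_pos hr hs.2.1
  have hn₁r : (0 : ℝ) < n₁ := by exact_mod_cast hn₁
  have hn₂r : (0 : ℝ) < n₂ := by exact_mod_cast hn₂
  have hμ := mu_nonneg hr hs.1 hinc.1
  have hγs : 0 ≤ γs := by
    have h1 := (Nat.cast_nonneg _).trans (hS.1 ⟨0, hn₁⟩)
    by_contra hneg
    push Not at hneg
    nlinarith
  have hγd : 0 < γ - γs := by linarith
  have heσ : frob (X - Ls) < σ := by nlinarith
  have hnb := normal_bound_star hs hX hσ.le hss heσ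
  obtain ⟨Ω, G, hdec, hG, hrow, hcol⟩ := thresh_decomp hn₁ hn₂ hγ0 hγ1 (X - Ls) S hS
  set E := X - Ls with hE
  obtain ⟨hUs, hVs, -, -, hL⟩ := hs
  have hUr : ∀ i, ∑ k, (Us i k) ^ 2 ≤ μc * r / n₁ := fun i =>
    (Real.sqrt_le_sqrt_iff (by positivity)).mp (hinc.1 i)
  have hVr : ∀ i, ∑ k, (Vs i k) ^ 2 ≤ μc * r / n₂ := fun i =>
    (Real.sqrt_le_sqrt_iff (by positivity)).mp (hinc.2 i)
  set K := (1 - Us * Usᵀ) * E * Vs with hK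
  have hEdec : E = Us * (Usᵀ * E) + K * Vsᵀ + (1 - Us * Usᵀ) * E * (1 - Vs * Vsᵀ) := by
    rw [hK, Matrix.mul_sub _ 1 (Vs * Vsᵀ), Matrix.mul_one, Matrix.mul_assoc _ Vs Vsᵀ,
      Matrix.sub_mul 1, Matrix.one_mul, Matrix.mul_assoc Us]
    abel
  have x1 : frob (restr Ω (Us * (Usᵀ * E))) ^ 2 ≤ (γ + γs) * μc * r * frob (Usᵀ * E) ^ 2 := by
    refine (restr_incoherent Ω Us (Usᵀ * E) (c := (γ + γs) * n₁) (ν := μc * r / n₁)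
      (by positivity) (hcol _) hUr).trans (le_of_eq ?_)
    field_simp
  have x2 : frob (restr Ω (K * Vsᵀ)) ^ 2 ≤ (γ + γs) * μc * r * frob K ^ 2 := by
    have e1 : (restr Ω (K * Vsᵀ))ᵀ = restr (fun j i => Ω i j) (Vs * Kᵀ) := by
      ext j i
      rw [Matrix.transpose_apply]
      have : (Vs * Kᵀ) j i = (K * Vsᵀ) i j := by
        simp only [Matrix.mul_apply, Matrix.transpose_apply]
        exact Finset.sum_congr rfl fun _ _ => mul_comm _ _
      simp only [restr, Matrix.of_apply, this]
    rw [← frob_transpose, e1, ← frob_transpose K]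
    refine (restr_incoherent (fun j i => Ω i j) Vs Kᵀ (c := (γ + γs) * n₂) (ν := μc * r / n₂)
      (by positivity) (hrow _) hVr).trans (le_of_eq ?_)
    field_simp
  have x12 : frob (Usᵀ * E) ^ 2 + frob K ^ 2 ≤ frob E ^ 2 := by
    have := pyth hUs E
    have h2 := pow_le_pow_left₀ (frob_nonneg _) (frob_mulV hVs ((1 - Us * Usᵀ) * E)) 2
    linarith
  have x3 : frob (restr Ω ((1 - Us * Usᵀ) * E * (1 - Vs * Vsᵀ))) ≤ a * frob E := by
    refine (frob_restr_le _ _).trans ?_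
    have h0 := frob_nonneg E
    have h1 : σ / 2 ≤ σ - frob E := by nlinarith
    have h2 := mul_le_mul_of_nonneg_right h1
      (frob_nonneg ((1 - Us * Usᵀ) * E * (1 - Vs * Vsᵀ)))
    have h3 : σ * frob ((1 - Us * Usᵀ) * E * (1 - Vs * Vsᵀ)) ≤ σ * (a * frob E) := by
      nlinarith
    exact le_of_mul_le_mul_left h3 hσ
  have hC : C₁ ^ 2 = 4 * (γ + 2 * γs) * μc * r + 4 * γs / (γ - γs) + a ^ 2 := by
    rw [hC₁, Real.sq_sqrt]
    positivity
  have hw : frob (hardThresh γ (E - S) - E) ≤ (frob (restr Ω (Us * (Usᵀ * E))) +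
      frob (restr Ω (K * Vsᵀ))) + frob (restr Ω ((1 - Us * Usᵀ) * E * (1 - Vs * Vsᵀ))) + frob G := by
    rw [hdec]
    have h1 := frob_sub_le G (restr Ω E)
    have h2 : restr Ω E = restr Ω (Us * (Usᵀ * E)) + restr Ω (K * Vsᵀ) +
        restr Ω ((1 - Us * Usᵀ) * E * (1 - Vs * Vsᵀ)) := by
      rw [← restr_add, ← restr_add, ← hEdec]
    have h3 := frob_add_le (restr Ω (Us * (Usᵀ * E)) + restr Ω (K * Vsᵀ))
      (restr Ω ((1 - Us * Usᵀ) * E * (1 - Vs * Vsᵀ)))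
    have h4 := frob_add_le (restr Ω (Us * (Usᵀ * E))) (restr Ω (K * Vsᵀ))
    rw [← h2] at h3
    linarith
  have hg : frob G ^ 2 ≤ 2 * (γs / (γ - γs)) * frob E ^ 2 := by
    have : frob G ^ 2 ≤ 2 * γs * frob E ^ 2 / (γ - γs) := by
      rw [le_div_iff₀ hγd]; linarith
    refine this.trans (le_of_eq (by ring))
  have hx3 := pow_le_pow_left₀ (frob_nonneg _) x3 2
  have hwsq := pow_le_pow_left₀ (frob_nonneg _) hw 2
  refine hwsq.trans ?_
  rw [hC]
  generalize frob (restr Ω (Us * (Usᵀ * E))) = y1 at *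
  generalize frob (restr Ω (K * Vsᵀ)) = y2 at *
  generalize frob (restr Ω ((1 - Us * Usᵀ) * E * (1 - Vs * Vsᵀ))) = y3 at *
  generalize frob G = g at *
  have hA : (y1 + y2) ^ 2 ≤ 2 * ((γ + 2 * γs) * μc * r) * frob E ^ 2 := by
    have hA0 : 0 ≤ (γ + γs) * μc * r := by positivity
    have hA1 : (γ + γs) * μc * r ≤ (γ + 2 * γs) * μc * r := by
      gcongr
      linarith
    have k1 : y1 ^ 2 + y2 ^ 2 ≤ (γ + γs) * μc * r * frob E ^ 2 := by
      have := mul_le_mul_of_nonneg_left x12 hA0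
      linarith
    have k2 := mul_le_mul_of_nonneg_right hA1 (sq_nonneg (frob E))
    have k3 : (y1 + y2) ^ 2 ≤ 2 * (y1 ^ 2 + y2 ^ 2) := add_sq_le
    linarith
  have hcs := arith_cs (y1 + y2) y3 g
  rw [show 4 * γs / (γ - γs) = 4 * (γs / (γ - γs)) by ring]
  rw [mul_pow] at hx3
  linarith

lemma normal_selfadj {U : Matrix (Fin n₁) (Fin r) ℝ} {V : Matrix (Fin n₂) (Fin r) ℝ}
    (A B : Matrix (Fin n₁) (Fin n₂) ℝ) :
    finner ((1 - U * Uᵀ) * A * (1 - V * Vᵀ)) B = finner A ((1 - U * Uᵀ) * B * (1 - V * Vᵀ)) := by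
  rw [finner_mul_right, finner_mul_left, perp_transpose, perp_transpose, Matrix.mul_assoc]

lemma tangent_selfadj {U : Matrix (Fin n₁) (Fin r) ℝ} {V : Matrix (Fin n₂) (Fin r) ℝ}
    (A B : Matrix (Fin n₁) (Fin n₂) ℝ) :
    finner (tangentProj U V A) B = finner A (tangentProj U V B) := by
  rw [tangentProj_eq, tangentProj_eq, finner_sub_left, finner_sub_right, normal_selfadj]

lemma tangent_pyth {U : Matrix (Fin n₁) (Fin r) ℝ} {V : Matrix (Fin n₂) (Fin r) ℝ}
    (hU : Uᵀ * U = 1) (hV : Vᵀ * V = 1) (A : Matrix (Fin n₁) (Fin n₂) ℝ) :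
    frob (tangentProj U V A) ^ 2 = frob A ^ 2 - frob ((1 - U * Uᵀ) * A * (1 - V * Vᵀ)) ^ 2 ∧
    finner (tangentProj U V A) A = frob (tangentProj U V A) ^ 2 := by
  have h : finner A ((1 - U * Uᵀ) * A * (1 - V * Vᵀ)) =
      frob ((1 - U * Uᵀ) * A * (1 - V * Vᵀ)) ^ 2 := by
    rw [frob_sq', normal_selfadj]
    congr 1
    rw [← Matrix.mul_assoc, ← Matrix.mul_assoc, perp_perp hU,
      Matrix.mul_assoc _ (1 - V * Vᵀ) (1 - V * Vᵀ), perp_perp hV]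
  have h1 : frob (tangentProj U V A) ^ 2 =
      frob A ^ 2 - frob ((1 - U * Uᵀ) * A * (1 - V * Vᵀ)) ^ 2 := by
    rw [tangentProj_eq, frob_sub_sq, h]; ring
  refine ⟨h1, ?_⟩
  rw [h1, tangentProj_eq, finner_sub_left, ← frob_sq', finner_comm, h]

set_option maxHeartbeats 4000000 in
/-- One step of the algorithm contracts the error. -/
lemma one_step (hr : 0 < r) {μc γ γs a C₁ σ η : ℝ}
    {Ls S X X' : Matrix (Fin n₁) (Fin n₂) ℝ} {Us : Matrix (Fin n₁) (Fin r) ℝ}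
    {ss : Fin r → ℝ} {Vs : Matrix (Fin n₂) (Fin r) ℝ} (hs : IsThinSVD Ls Us ss Vs)
    (hinc : Incoherent μc Us Vs) (hS : SparseSet γs S)
    (hγ0 : 0 < γ) (hγ1 : γ < 1) (ha : a ≤ 1 / 2) (hγ : γ > 2 * γs)
    (hC₁ : C₁ = Real.sqrt (4 * (γ + 2 * γs) * μc * r + 4 * γs / (γ - γs) + a ^ 2))
    (hC₁lt : C₁ < 1 / 2)
    (hσ : 0 < σ) (hss : ∀ k, σ ≤ ss k) (he : frob (X - Ls) ≤ a * σ)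
    (hη0 : 0 < η) (hη : η < (1 - 2 * C₁) / 80)
    (hstep : IsGradStep γ η r (Ls + S) X X') :
    frob (X' - Ls) ≤ (1 - (1 - 2 * C₁) / 8 * η) * frob (X - Ls) := by
  obtain ⟨U, s, V, hX, hret⟩ := hstep
  have hC0 : 0 ≤ C₁ := hC₁ ▸ Real.sqrt_nonneg _
  have hD := gradient_error hr hs hinc hS hX hγ0 hγ1 ha hγ hC₁ hσ hss he
  have hXY : X - (Ls + S) = X - Ls - S := by abel
  rw [hXY] at hret
  have heσ2 : frob (X - Ls) ≤ σ / 2 := by nlinarith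
  have heσ : frob (X - Ls) < σ := by linarith
  have hnb := normal_bound hs hX hσ.le hss
  have hweyl : ∀ {U s V}, IsThinSVD X U s V → LB (Matrix.diagonal s) (σ / 2) := fun h =>
    (weyl hs h hσ.le hss heσ).mono (by linarith)
  set D := hardThresh γ (X - Ls - S) with hDdef
  set E := X - Ls with hE
  set δ := -(η • tangentProj U V D) with hδ
  have e0 := frob_nonneg E
  have w0 := frob_nonneg (D - E)
  set e := frob E with hee
  set w := frob (D - E) with hww
  have hw : w ≤ 1.415 * C₁ * e := by
    apply le_of_sq_le_sq _ (by positivity)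
    nlinarith [mul_nonneg (sq_nonneg C₁) (sq_nonneg e)]
  have hw1 : w ≤ e := by nlinarith
  have hTp := tangent_pyth hX.1 hX.2.1 E
  have hDp := (tangent_pyth hX.1 hX.2.1 D).1
  set p := frob (tangentProj U V E) with hpp
  have p0 : 0 ≤ p := frob_nonneg _
  have hq : frob ((1 - U * Uᵀ) * E * (1 - V * Vᵀ)) ≤ e / 2 := by
    have : σ * frob ((1 - U * Uᵀ) * E * (1 - V * Vᵀ)) ≤ σ * (e / 2) := by nlinarith
    exact le_of_mul_le_mul_left this hσ
  have hq2 := pow_le_pow_left₀ (frob_nonneg _) hq 2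
  have hp1 : 0.86 * e ≤ p := by
    apply le_of_sq_le_sq _ p0
    nlinarith
  have hinner : (1 - 2 * C₁) / 4 * e ^ 2 ≤ finner E (tangentProj U V D) := by
    rw [← tangent_selfadj, show D = E + (D - E) by abel, finner_add_right, hTp.2]
    have h1 := abs_le.mp (abs_finner_le (tangentProj U V E) (D - E))
    exact arith_descent hC0 hC₁lt e0 hp1 hw h1.1
  have hDn : frob D ≤ 2 * e := by
    have := frob_add_le E (D - E)
    rw [show E + (D - E) = D by abel] at this
    linarith
  have hTD : frob (tangentProj U V D) ≤ 2 * e := by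
    refine le_trans ?_ hDn
    apply le_of_sq_le_sq _ (frob_nonneg _)
    nlinarith [sq_nonneg (frob ((1 - U * Uᵀ) * D * (1 - V * Vᵀ)))]
  have hδn : frob δ ≤ 2 * η * e := by
    rw [hδ, frob_neg, frob_smul, abs_of_pos hη0]
    nlinarith
  have hM : frob (X + δ - Ls) ≤ (1 - (1 - 2 * C₁) / 4 * η + 2 * η ^ 2) * e := by
    have e1 : X + δ - Ls = E - η • tangentProj U V D := by rw [hδ, hE]; abel
    rw [e1]
    apply le_of_sq_le_sq _ (mul_nonneg (by nlinarith) e0)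
    rw [frob_sub_sq, finner_smul_right, frob_smul, abs_of_pos hη0]
    exact arith_step hη0 hinner (frob_nonneg _) hTD
  have hδσ : frob δ ≤ σ / 4 := by nlinarith
  have htan : ∀ {U' : Matrix (Fin n₁) (Fin r) ℝ} {s' : Fin r → ℝ} {V' : Matrix (Fin n₂) (Fin r) ℝ}, IsThinSVD X U' s' V' →
      (1 - U' * U'ᵀ) * δ * (1 - V' * V'ᵀ) = 0 := by
    intro U' s' V' h
    rw [hδ, Matrix.mul_neg, Matrix.mul_smul, Matrix.neg_mul, Matrix.smul_mul,
      tangent_indep hX h, smul_zero, neg_zero]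
  have hR : ∀ {U' : Matrix (Fin n₁) (Fin r) ℝ} {s' : Fin r → ℝ} {V' : Matrix (Fin n₂) (Fin r) ℝ}, IsThinSVD X U' s' V' →
      frob (X + δ - orthoRetract U' V' (X + δ)) ≤ 8 * η ^ 2 * e := by
    intro U' s' V' h
    have h1 := retract_bound h (hweyl h) (by linarith) (htan h)
    have h2 : σ / 4 * frob (X + δ - orthoRetract U' V' (X + δ)) ≤
        (σ / 2 - frob δ) * frob (X + δ - orthoRetract U' V' (X + δ)) :=
      mul_le_mul_of_nonneg_right (by linarith) (frob_nonneg _)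
    have h3 := pow_le_pow_left₀ (frob_nonneg _) hδn 2
    have h4 : σ / 4 * frob (X + δ - orthoRetract U' V' (X + δ)) ≤ σ / 4 * (8 * η ^ 2 * e) := by
      have h5 : e * e * η ^ 2 ≤ σ / 2 * e * η ^ 2 := by gcongr
      nlinarith
    exact le_of_mul_le_mul_left h4 (by positivity)
  have hfin : frob (X + δ - X') ≤ 8 * η ^ 2 * e := by
    rcases hret with h | ⟨U', s', V', h, hL⟩
    · exact (h.2 _ (rank_orthoRetract U V (X + δ))).trans (hR hX)
    · rw [hL]; exact hR h
  have htri := frob_sub_le (X + δ - Ls) (X + δ - X')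
  rw [show X + δ - Ls - (X + δ - X') = X' - Ls by abel] at htri
  have hlast : (1 - (1 - 2 * C₁) / 4 * η + 10 * η ^ 2) * e ≤ (1 - (1 - 2 * C₁) / 8 * η) * e := by
    apply mul_le_mul_of_nonneg_right _ e0
    nlinarith
  linarith

end step
end RPCA


/-- linear convergence of manifold gradient descent, fully observed case. -/
theorem convergence_fully_observed
    {n₁ n₂ r : ℕ} (hr : 0 < r)
    (μc γ γs a C₁ : ℝ)
    (Lstar Sstar Y L0 : Matrix (Fin n₁) (Fin n₂) ℝ)
    (Ustar : Matrix (Fin n₁) (Fin r) ℝ) (sstar : Fin r → ℝ)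
    (Vstar : Matrix (Fin n₂) (Fin r) ℝ)
    (hSVD : RPCA.IsThinSVD Lstar Ustar sstar Vstar)
    (hinc : RPCA.Incoherent μc Ustar Vstar)
    (hS : RPCA.SparseSet γs Sstar)
    (hY : Y = Lstar + Sstar)
    (hγ0 : 0 < γ) (hγ1 : γ < 1)
    (ha : a ≤ 1 / 2)
    (hγ : γ > 2 * γs)
    (hC₁ : C₁ = Real.sqrt (4 * (γ + 2 * γs) * μc * r + 4 * γs / (γ - γs) + a ^ 2))
    (hC₁lt : C₁ < 1 / 2)
    (hinit : RPCA.frob (L0 - Lstar) ≤ a * sstar ⟨r - 1, Nat.sub_lt hr Nat.one_pos⟩) :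
    ∃ η₀ > 0, ∀ η : ℝ, 0 < η → η < η₀ →
      ∀ L : ℕ → Matrix (Fin n₁) (Fin n₂) ℝ,
        L 0 = L0 →
        (∀ k, RPCA.IsGradStep γ η r Y (L k) (L (k + 1))) →
        ∀ k, RPCA.frob (L k - Lstar) ≤
          (1 - (1 - 2 * C₁) / 8 * η) ^ k * RPCA.frob (L0 - Lstar) := by
  have hC0 : 0 ≤ C₁ := hC₁ ▸ Real.sqrt_nonneg _
  set σ := sstar ⟨r - 1, Nat.sub_lt hr Nat.one_pos⟩ with hσdef
  have hσ : 0 < σ := hSVD.2.2.2.1 _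
  have hss : ∀ k, σ ≤ sstar k := fun k => hSVD.2.2.1 (by
    rw [Fin.le_def]; have := k.isLt; simp only; omega)
  refine ⟨(1 - 2 * C₁) / 80, by linarith, ?_⟩
  intro η hη0 hη L hL0 hstep
  have hq0 : 0 ≤ 1 - (1 - 2 * C₁) / 8 * η := by nlinarith
  have hq1 : 1 - (1 - 2 * C₁) / 8 * η ≤ 1 := by nlinarith
  intro k
  induction k with
  | zero => simp [hL0]
  | succ k ih =>
    have he : RPCA.frob (L k - Lstar) ≤ a * σ := by
      refine (ih.trans ?_).trans hinit
      exact mul_le_of_le_one_left (RPCA.frob_nonneg _) (pow_le_one₀ hq0 hq1)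
    have hst := hstep k
    rw [hY] at hst
    have h1 := RPCA.one_step hr hSVD hinc hS hγ0 hγ1 ha hγ hC₁ hC₁lt hσ hss he hη0 hη hst
    refine h1.trans ?_
    rw [pow_succ', mul_assoc]
    exact mul_le_mul_of_nonneg_left ih hq0
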